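/- Let T : dom(T) ⊆ H₁ → H₂ be a densely defined, closed operator between complex Hilbert spaces. Then T is Fredholm (i.e., ran(T) is closed and dim ker(T) and dim ker(T*) are both finite) if and only if both self-adjoint nonnegative operators T*T (in H₁) and TT* (in H₂) are Fredholm (i.e., ran(T*T) is closed and dim ker(T*T) is finite, and ran(TT*) is closed and dim ker(TT*) is finite). -/

import Mathlib

open scoped InnerProductSpace
open Cardinal

noncomputable section

variable {E F G H : Type*}
  [NormedAddCommGroup E] [InnerProductSpace ℂ E] [CompleteSpace E]
  [NormedAddCommGroup F] [InnerProductSpace ℂ F] [CompleteSpace F]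
  [NormedAddCommGroup G] [InnerProductSpace ℂ G] [CompleteSpace G]
  [NormedAddCommGroup H] [InnerProductSpace ℂ H] [CompleteSpace H]

/-- The product (composition) `T₂T₁` of two partially defined linear operators, with domain
`dom(T₂T₁) = {f ∈ dom T₁ | T₁ f ∈ dom T₂}` and value `(T₂T₁) f = T₂ (T₁ f)`. -/
def pcomp {E F G : Type*}
    [NormedAddCommGroup E] [InnerProductSpace ℂ E]
    [NormedAddCommGroup F] [InnerProductSpace ℂ F]
    [NormedAddCommGroup G] [InnerProductSpace ℂ G]
    (T₂ : F →ₗ.[ℂ] G) (T₁ : E →ₗ.[ℂ] F) : E →ₗ.[ℂ] G where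
  domain := (T₂.domain.comap T₁.toFun).map T₁.domain.subtype
  toFun := T₂.toFun ∘ₗ
    (T₁.toFun.restrict (p := T₂.domain.comap T₁.toFun) (q := T₂.domain) fun _ hx => hx) ∘ₗ
    (Submodule.equivMapOfInjective T₁.domain.subtype (Submodule.injective_subtype _)
      (T₂.domain.comap T₁.toFun)).symm.toLinearMap

/-- The identity as a partially defined operator (domain all of `X`). -/
def pid (X : Type*) [NormedAddCommGroup X] [InnerProductSpace ℂ X] : X →ₗ.[ℂ] X :=
  ⟨⊤, (⊤ : Submodule ℂ X).subtype⟩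

/-- Powers of a partially defined operator: `S⁰ = I`, `S¹ = S`, and recursively
`dom(S^m) = {f ∈ dom(S^{m-1}) | S^{m-1} f ∈ dom S}`, `S^m f = S (S^{m-1} f)`. -/
def pmapPow {X : Type*} [NormedAddCommGroup X] [InnerProductSpace ℂ X]
    (S : X →ₗ.[ℂ] X) : ℕ → X →ₗ.[ℂ] X
  | 0 => pid X
  | 1 => S
  | (n + 2) => pcomp S (pmapPow S (n + 1))

/-- The kernel of `A - μ·I` as a submodule of the domain of `A`. -/
def kerAt {X : Type*} [NormedAddCommGroup X] [InnerProductSpace ℂ X]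
    (A : X →ₗ.[ℂ] X) (μ : ℂ) : Submodule ℂ A.domain :=
  LinearMap.ker (A.toFun - μ • A.domain.subtype)

/-- Deficiency index `n₊(S) = dim ker(S* - i·I)`, a Hilbert-space dimension as a cardinal. -/
def nPlus (S : H →ₗ.[ℂ] H) : Cardinal := Module.rank ℂ (kerAt S.adjoint Complex.I)

/-- Deficiency index `n₋(S) = dim ker(S* + i·I)`, a Hilbert-space dimension as a cardinal. -/
def nMinus (S : H →ₗ.[ℂ] H) : Cardinal := Module.rank ℂ (kerAt S.adjoint (-Complex.I))

/-- The symmetry condition `⟪Sf, g⟫ = ⟪f, Sg⟫` for all `f, g` in the domain of `S`. -/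
def IsSymmP {X : Type*} [NormedAddCommGroup X] [InnerProductSpace ℂ X]
    (S : X →ₗ.[ℂ] X) : Prop :=
  ∀ f g : S.domain, ⟪S f, (g : X)⟫_ℂ = ⟪(f : X), S g⟫_ℂ

/-- The defect number of `T` at `0`: `def(T,0) = dim ker(T*)`, as a cardinal. -/
def defect0 (T : E →ₗ.[ℂ] F) : Cardinal := Module.rank ℂ (LinearMap.ker T.adjoint.toFun)

/-- `0` belongs to the field of regularity of `T`: there is `c > 0` with
`‖T f‖ ≥ c ‖f‖` for all `f ∈ dom T`. -/
def ZeroRegular {X Y : Type*} [NormedAddCommGroup X] [InnerProductSpace ℂ X]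
    [NormedAddCommGroup Y] [InnerProductSpace ℂ Y] (T : X →ₗ.[ℂ] Y) : Prop :=
  ∃ c : ℝ, 0 < c ∧ ∀ f : T.domain, c * ‖(f : X)‖ ≤ ‖T f‖

/-- `T` is Fredholm: densely defined, closed, with closed range, and finite-dimensional
kernel and cokernel (= kernel of the adjoint). -/
def IsFredholmP (T : E →ₗ.[ℂ] F) : Prop :=
  Dense (T.domain : Set E) ∧ T.IsClosed ∧
    IsClosed ((LinearMap.range T.toFun : Submodule ℂ F) : Set F) ∧
    Module.rank ℂ (LinearMap.ker T.toFun) < ℵ₀ ∧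
    Module.rank ℂ (LinearMap.ker T.adjoint.toFun) < ℵ₀

/-- `T` is left semi-Fredholm: densely defined, closed, with closed range and
finite-dimensional kernel. -/
def IsLeftSemiFredholmP (T : E →ₗ.[ℂ] F) : Prop :=
  Dense (T.domain : Set E) ∧ T.IsClosed ∧
    IsClosed ((LinearMap.range T.toFun : Submodule ℂ F) : Set F) ∧
    Module.rank ℂ (LinearMap.ker T.toFun) < ℵ₀

/-- The (semi-)Fredholm index `ind(T) = dim ker T - dim ker T*` (as an integer,
via `finrank`). -/
def indP (T : E →ₗ.[ℂ] F) : ℤ :=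
  (Module.finrank ℂ (LinearMap.ker T.toFun) : ℤ) -
    (Module.finrank ℂ (LinearMap.ker T.adjoint.toFun) : ℤ)

lemma pcomp_mem {E F G : Type*}
    [NormedAddCommGroup E] [InnerProductSpace ℂ E]
    [NormedAddCommGroup F] [InnerProductSpace ℂ F]
    [NormedAddCommGroup G] [InnerProductSpace ℂ G]
    (S : F →ₗ.[ℂ] G) (T : E →ₗ.[ℂ] F) (f : T.domain) (hf : T f ∈ S.domain) :
    (f : E) ∈ (pcomp S T).domain :=
  Submodule.mem_map.2 ⟨f, hf, rfl⟩

lemma pcomp_val {E F G : Type*}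
    [NormedAddCommGroup E] [InnerProductSpace ℂ E]
    [NormedAddCommGroup F] [InnerProductSpace ℂ F]
    [NormedAddCommGroup G] [InnerProductSpace ℂ G]
    (S : F →ₗ.[ℂ] G) (T : E →ₗ.[ℂ] F) (f : T.domain) (hf : T f ∈ S.domain) :
    (pcomp S T).toFun ⟨f, pcomp_mem S T f hf⟩ = S ⟨T f, hf⟩ := by
  have h : (Submodule.equivMapOfInjective T.domain.subtype (Submodule.injective_subtype _)
      (S.domain.comap T.toFun)).symm ⟨f, pcomp_mem S T f hf⟩ = ⟨f, hf⟩ := by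
    rw [LinearEquiv.symm_apply_eq]
    rfl
  change S.toFun ((T.toFun.restrict (p := S.domain.comap T.toFun) (q := S.domain) fun _ hx => hx)
    ((Submodule.equivMapOfInjective T.domain.subtype (Submodule.injective_subtype _)
      (S.domain.comap T.toFun)).symm ⟨f, pcomp_mem S T f hf⟩)) = _
  rw [h]
  rfl

lemma pcomp_cases {E F G : Type*}
    [NormedAddCommGroup E] [InnerProductSpace ℂ E]
    [NormedAddCommGroup F] [InnerProductSpace ℂ F]
    [NormedAddCommGroup G] [InnerProductSpace ℂ G]
    (S : F →ₗ.[ℂ] G) (T : E →ₗ.[ℂ] F) (x : (pcomp S T).domain) :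
    ∃ (f : T.domain) (hf : T f ∈ S.domain), (f : E) = x ∧
      (pcomp S T).toFun x = S ⟨T f, hf⟩ := by
  obtain ⟨x, hx⟩ := x
  obtain ⟨f, hf, rfl⟩ := Submodule.mem_map.1 hx
  exact ⟨f, hf, rfl, pcomp_val S T f hf⟩

lemma pcomp_range {E F G : Type*}
    [NormedAddCommGroup E] [InnerProductSpace ℂ E]
    [NormedAddCommGroup F] [InnerProductSpace ℂ F]
    [NormedAddCommGroup G] [InnerProductSpace ℂ G]
    (S : F →ₗ.[ℂ] G) (T : E →ₗ.[ℂ] F) (h : G) :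
    h ∈ LinearMap.range (pcomp S T).toFun ↔
      ∃ (f : T.domain) (hf : T f ∈ S.domain), S ⟨T f, hf⟩ = h := by
  constructor
  · rintro ⟨x, rfl⟩
    obtain ⟨f, hf, -, h2⟩ := pcomp_cases S T x
    exact ⟨f, hf, h2.symm⟩
  · rintro ⟨f, hf, rfl⟩
    exact ⟨_, pcomp_val S T f hf⟩

lemma pcomp_ker_rank {E F G : Type*}
    [NormedAddCommGroup E] [InnerProductSpace ℂ E]
    [NormedAddCommGroup F] [InnerProductSpace ℂ F]
    [NormedAddCommGroup G] [InnerProductSpace ℂ G]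
    (S : F →ₗ.[ℂ] G) (T : E →ₗ.[ℂ] F)
    (H : ∀ (f : T.domain) (hf : T f ∈ S.domain), S ⟨T f, hf⟩ = 0 → T f = 0) :
    Module.rank ℂ (LinearMap.ker (pcomp S T).toFun) = Module.rank ℂ (LinearMap.ker T.toFun) := by
  have e1 := (Submodule.equivMapOfInjective (pcomp S T).domain.subtype
    (Submodule.injective_subtype _) (LinearMap.ker (pcomp S T).toFun)).rank_eq
  have e2 := (Submodule.equivMapOfInjective T.domain.subtype
    (Submodule.injective_subtype _) (LinearMap.ker T.toFun)).rank_eq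
  rw [e1, e2]
  have : (LinearMap.ker (pcomp S T).toFun).map (pcomp S T).domain.subtype =
      (LinearMap.ker T.toFun).map T.domain.subtype := by
    ext x
    constructor
    · rintro ⟨y, hy, rfl⟩
      obtain ⟨f, hf, h1, h2⟩ := pcomp_cases S T y
      refine ⟨f, ?_, h1⟩
      exact H f hf (h2.symm.trans hy)
    · rintro ⟨f, hf, rfl⟩
      have hf0 : T f = 0 := hf
      have hf' : T f ∈ S.domain := by rw [hf0]; exact S.domain.zero_mem
      refine ⟨⟨f, pcomp_mem S T f hf'⟩, ?_, rfl⟩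
      change (pcomp S T).toFun _ = 0
      rw [pcomp_val S T f hf']
      have : (⟨T f, hf'⟩ : S.domain) = 0 := Subtype.ext hf0
      rw [this]; exact S.map_zero
  rw [this]

section
variable {E F : Type*}
  [NormedAddCommGroup E] [InnerProductSpace ℂ E] [CompleteSpace E]
  [NormedAddCommGroup F] [InnerProductSpace ℂ F] [CompleteSpace F]

/-- Bounded right inverse on a closed range. -/
lemma exists_bound (T : E →ₗ.[ℂ] F) (hc : T.IsClosed)
    (hr : IsClosed ((LinearMap.range T.toFun : Submodule ℂ F) : Set F)) :
    ∃ C : ℝ, 0 < C ∧ ∀ f : T.domain, ∃ f' : T.domain, T f' = T f ∧ ‖(f' : E)‖ ≤ C * ‖T f‖ := by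
  have : CompleteSpace T.graph := hc.completeSpace_coe
  have : CompleteSpace (LinearMap.range T.toFun) := hr.completeSpace_coe
  have hmem : ∀ x : T.graph, ((ContinuousLinearMap.snd ℂ E F).comp T.graph.subtypeL) x ∈
      LinearMap.range T.toFun := by
    rintro ⟨x, hx⟩
    obtain ⟨y, h1, h2⟩ := (LinearPMap.mem_graph_iff T).1 hx
    exact ⟨y, h2⟩
  let A : T.graph →L[ℂ] LinearMap.range T.toFun :=
    ((ContinuousLinearMap.snd ℂ E F).comp T.graph.subtypeL).codRestrict _ hmem
  have hA : Function.Surjective A := by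
    rintro ⟨_, ⟨f, rfl⟩⟩
    exact ⟨⟨(f, T f), T.mem_graph f⟩, rfl⟩
  obtain ⟨C, hC, h⟩ := A.exists_preimage_norm_le hA
  refine ⟨C, hC, fun f => ?_⟩
  obtain ⟨⟨x, hx⟩, h1, h2⟩ := h ⟨T f, ⟨f, rfl⟩⟩
  obtain ⟨y, h3, h4⟩ := (LinearPMap.mem_graph_iff T).1 hx
  refine ⟨y, h4.trans (congrArg Subtype.val h1), ?_⟩
  rw [h3]
  exact (norm_fst_le x).trans h2

/-- If the range is closed, everything orthogonal to the kernel is in the range of `T*T`. -/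
lemma orth_ker (T : E →ₗ.[ℂ] F) (hd : Dense (T.domain : Set E)) (hc : T.IsClosed)
    (hr : IsClosed ((LinearMap.range T.toFun : Submodule ℂ F) : Set F)) (h : E)
    (hh : ∀ f : T.domain, T f = 0 → ⟪h, (f : E)⟫_ℂ = 0) :
    ∃ (f : T.domain) (hf : T f ∈ T.adjoint.domain), T.adjoint ⟨T f, hf⟩ = h := by
  have : CompleteSpace (LinearMap.range T.toFun) := hr.completeSpace_coe
  obtain ⟨C, hC, hb⟩ := exists_bound T hc hr
  let R := T.toFun.rangeRestrict
  obtain ⟨s, hs⟩ := R.exists_rightInverse_of_surjective T.toFun.range_rangeRestrict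
  have hs' : ∀ y, T.toFun (s y) = y := fun y => congrArg Subtype.val (LinearMap.congr_fun hs y)
  have key : ∀ f f' : T.domain, T f = T f' → ⟪h, (f : E)⟫_ℂ = ⟪h, (f' : E)⟫_ℂ := by
    intro f f' e
    have := hh (f - f') (by rw [LinearPMap.map_sub, e, sub_self])
    rw [Submodule.coe_sub, inner_sub_right] at this
    exact sub_eq_zero.1 this
  let φ : LinearMap.range T.toFun →ₗ[ℂ] ℂ := (innerₛₗ ℂ h) ∘ₗ T.domain.subtype ∘ₗ s
  let Φ : StrongDual ℂ (LinearMap.range T.toFun) := φ.mkContinuous (‖h‖ * C) (by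
    intro y
    obtain ⟨f', h1, h2⟩ := hb (s y)
    have e : φ y = ⟪h, (f' : E)⟫_ℂ := key _ _ h1.symm
    have e2 : T (s y) = y := hs' y
    rw [e]
    rw [e2] at h2
    calc _ ≤ ‖h‖ * ‖(f' : E)‖ := norm_inner_le_norm _ _
      _ ≤ ‖h‖ * (C * ‖(y : F)‖) := by gcongr
      _ = _ := by rw [mul_assoc]; rfl)
  let g := (InnerProductSpace.toDual ℂ (LinearMap.range T.toFun)).symm Φ
  have hg : ∀ x : T.domain, ⟪h, (x : E)⟫_ℂ = ⟪(g : F), T x⟫_ℂ := by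
    intro x
    have e : ⟪g, (⟨T x, ⟨x, rfl⟩⟩ : LinearMap.range T.toFun)⟫_ℂ = Φ ⟨T x, ⟨x, rfl⟩⟩ :=
      InnerProductSpace.toDual_symm_apply
    have e1 : ⟪(g : F), T x⟫_ℂ = Φ ⟨T x, ⟨x, rfl⟩⟩ := e
    rw [e1]
    exact key _ _ (hs' ⟨T x, ⟨x, rfl⟩⟩).symm
  obtain ⟨f, hf⟩ := g.2
  have hf' : T f = g := hf
  have hm : T f ∈ T.adjoint.domain := by
    rw [hf']
    exact LinearPMap.mem_adjoint_domain_of_exists _ ⟨h, hg⟩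
  refine ⟨f, hm, LinearPMap.adjoint_apply_eq hd _ fun x => ?_⟩
  rw [hg x, ← hf']

lemma ker_isClosed (T : E →ₗ.[ℂ] F) (hc : T.IsClosed) :
    IsClosed (((LinearMap.ker T.toFun).map T.domain.subtype : Submodule ℂ E) : Set E) := by
  have : (((LinearMap.ker T.toFun).map T.domain.subtype : Submodule ℂ E) : Set E) =
      (fun x : E => (x, (0 : F))) ⁻¹' (T.graph : Set (E × F)) := by
    ext x
    constructor
    · rintro ⟨f, hf, rfl⟩
      exact (LinearPMap.mem_graph_iff T).2 ⟨f, rfl, hf⟩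
    · intro hx
      obtain ⟨f, h1, h2⟩ := (LinearPMap.mem_graph_iff T).1 hx
      exact ⟨f, h2, h1⟩
  rw [this]
  exact IsClosed.preimage (by fun_prop) hc

/-- `I + TT*` is onto. -/
lemma one_add_onto (T : E →ₗ.[ℂ] F) (hd : Dense (T.domain : Set E)) (hc : T.IsClosed) (g : F) :
    ∃ (u : T.adjoint.domain) (hu : T.adjoint u ∈ T.domain), (u : F) + T ⟨T.adjoint u, hu⟩ = g := by
  let K : Submodule ℂ (WithLp 2 (E × F)) :=
    T.graph.comap (WithLp.linearEquiv 2 ℂ (E × F)).toLinearMap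
  have hK : IsClosed (K : Set (WithLp 2 (E × F))) :=
    IsClosed.preimage (WithLp.prod_continuous_ofLp 2 E F) hc
  have : CompleteSpace K := hK.completeSpace_coe
  obtain ⟨y, hy, z, hz, e⟩ := K.exists_add_mem_mem_orthogonal (WithLp.toLp 2 ((0 : E), g))
  obtain ⟨f, h1, h2⟩ := (LinearPMap.mem_graph_iff T).1 (show y.ofLp ∈ T.graph from hy)
  have hz' : ∀ x : T.domain, ⟪-z.fst, (x : E)⟫_ℂ = ⟪z.snd, T x⟫_ℂ := by
    intro x
    have := (Submodule.mem_orthogonal' K z).1 hz (WithLp.toLp 2 ((x : E), T x)) (T.mem_graph x)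
    rw [WithLp.prod_inner_apply] at this
    rw [inner_neg_left]
    exact neg_eq_of_add_eq_zero_right this
  have hm : z.snd ∈ T.adjoint.domain := LinearPMap.mem_adjoint_domain_of_exists _ ⟨_, hz'⟩
  have hv : T.adjoint ⟨z.snd, hm⟩ = -z.fst := LinearPMap.adjoint_apply_eq hd _ hz'
  have e1 : (0 : E) = y.fst + z.fst := congrArg WithLp.fst e
  have e2 : g = y.snd + z.snd := congrArg WithLp.snd e
  have h1' : (f : E) = y.fst := h1
  have h2' : T f = y.snd := h2
  have hvf : T.adjoint ⟨z.snd, hm⟩ = f := by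
    rw [hv, h1']; exact (eq_neg_of_add_eq_zero_left e1.symm).symm
  refine ⟨⟨z.snd, hm⟩, by rw [hvf]; exact f.2, ?_⟩
  have : (⟨T.adjoint ⟨z.snd, hm⟩, by rw [hvf]; exact f.2⟩ : T.domain) = f := Subtype.ext hvf
  rw [this, h2', e2, add_comm]

end

/-- A densely defined closed `T` is Fredholm (closed range, finite-dimensional kernel
and cokernel) if and only if both `T*T` and `TT*` are Fredholm (closed range and
finite-dimensional kernel). -/
theorem fredholm_iff_TstarT_TTstar (T : E →ₗ.[ℂ] F)
    (hd : Dense (T.domain : Set E)) (hc : T.IsClosed) :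
    (IsClosed ((LinearMap.range T.toFun : Submodule ℂ F) : Set F) ∧
      Module.rank ℂ (LinearMap.ker T.toFun) < ℵ₀ ∧
      Module.rank ℂ (LinearMap.ker T.adjoint.toFun) < ℵ₀) ↔
    (IsClosed ((LinearMap.range (pcomp T.adjoint T).toFun : Submodule ℂ E) : Set E) ∧
      Module.rank ℂ (LinearMap.ker (pcomp T.adjoint T).toFun) < ℵ₀ ∧
      IsClosed ((LinearMap.range (pcomp T T.adjoint).toFun : Submodule ℂ F) : Set F) ∧
      Module.rank ℂ (LinearMap.ker (pcomp T T.adjoint).toFun) < ℵ₀) := by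
  have hfa := LinearPMap.adjoint_isFormalAdjoint hd
  have k1 : ∀ (f : T.domain) (hf : T f ∈ T.adjoint.domain),
      T.adjoint ⟨T f, hf⟩ = 0 → T f = 0 := by
    intro f hf h0
    have := hfa ⟨T f, hf⟩ f
    rw [h0, inner_zero_left] at this
    exact inner_self_eq_zero.1 this.symm
  have k2 : ∀ (f : T.adjoint.domain) (hf : T.adjoint f ∈ T.domain),
      T ⟨T.adjoint f, hf⟩ = 0 → T.adjoint f = 0 := by
    intro f hf h0
    have := hfa f ⟨T.adjoint f, hf⟩
    rw [h0, inner_zero_right] at this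
    exact inner_self_eq_zero.1 this
  rw [pcomp_ker_rank _ _ k1, pcomp_ker_rank _ _ k2]
  have hK := ker_isClosed T hc
  set K := (LinearMap.ker T.toFun).map T.domain.subtype with hKdef
  have : CompleteSpace K := hK.completeSpace_coe
  constructor
  · rintro ⟨hr, hk, hk'⟩
    refine ⟨?_, hk, ?_, hk'⟩
    · have : LinearMap.range (pcomp T.adjoint T).toFun = Kᗮ := by
        ext h
        rw [pcomp_range]
        constructor
        · rintro ⟨f, hf, rfl⟩
          rw [Submodule.mem_orthogonal']
          rintro _ ⟨x, hx, rfl⟩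
          have hx0 : T x = 0 := hx
          have := hfa ⟨T f, hf⟩ x
          rw [hx0, inner_zero_right] at this
          exact this
        · intro hh
          refine orth_ker T hd hc hr h fun f hf => ?_
          exact (Submodule.mem_orthogonal' K h).1 hh f ⟨f, hf, rfl⟩
      rw [this]
      exact K.isClosed_orthogonal
    · have : LinearMap.range (pcomp T T.adjoint).toFun = LinearMap.range T.toFun := by
        ext h
        rw [pcomp_range]
        constructor
        · rintro ⟨f, hf, rfl⟩
          exact ⟨_, rfl⟩
        · rintro ⟨f, rfl⟩
          obtain ⟨y, hy, z, hz, e⟩ := K.exists_add_mem_mem_orthogonal (f : E)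
          obtain ⟨x, hx, rfl⟩ := hy
          have hx0 : T x = 0 := hx
          obtain ⟨u, hu, huz⟩ := orth_ker T hd hc hr z fun f hf =>
            (Submodule.mem_orthogonal' K z).1 hz f ⟨f, hf, rfl⟩
          have e' : T.adjoint ⟨T u, hu⟩ = ((f - x : T.domain) : E) := by
            rw [huz, Submodule.coe_sub, e]
            simp
          have hm : T.adjoint ⟨T u, hu⟩ ∈ T.domain := by rw [e']; exact (f - x).2
          refine ⟨⟨T u, hu⟩, hm, ?_⟩
          have : (⟨T.adjoint ⟨T u, hu⟩, hm⟩ : T.domain) = f - x := Subtype.ext e'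
          rw [this, LinearPMap.map_sub, hx0, sub_zero]
          rfl
      rw [this]
      exact hr
  · rintro ⟨-, hk, hr, hk'⟩
    refine ⟨?_, hk, hk'⟩
    have : LinearMap.range T.toFun = LinearMap.range (pcomp T T.adjoint).toFun := by
      apply le_antisymm
      · set R := LinearMap.range (pcomp T T.adjoint).toFun with hR
        have : CompleteSpace R := hr.completeSpace_coe
        rw [← R.orthogonal_orthogonal]
        rintro _ ⟨f, rfl⟩
        rw [Submodule.mem_orthogonal]
        intro g hg
        obtain ⟨u, hu, e⟩ := one_add_onto T hd hc g
        have h1 : ⟪g, T ⟨T.adjoint u, hu⟩⟫_ℂ = 0 :=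
          (Submodule.mem_orthogonal' R g).1 hg _ ((pcomp_range _ _ _).2 ⟨u, hu, rfl⟩)
        have h2 := hfa u ⟨T.adjoint u, hu⟩
        rw [← e, inner_add_left, ← h2] at h1
        rw [inner_self_eq_norm_sq_to_K, inner_self_eq_norm_sq_to_K] at h1
        have h3 : ‖T.adjoint u‖ ^ 2 + ‖T ⟨T.adjoint u, hu⟩‖ ^ 2 = 0 := by
          refine (RCLike.ofReal_eq_zero (K := ℂ)).1 ?_
          rw [RCLike.ofReal_add, RCLike.ofReal_pow, RCLike.ofReal_pow]
          exact h1
        have h4 : T.adjoint u = 0 := by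
          rw [← norm_eq_zero]; nlinarith [sq_nonneg ‖T.adjoint u‖, sq_nonneg ‖T ⟨T.adjoint u, hu⟩‖]
        have h5 : T ⟨T.adjoint u, hu⟩ = 0 := by
          rw [← norm_eq_zero]; nlinarith [sq_nonneg ‖T.adjoint u‖, sq_nonneg ‖T ⟨T.adjoint u, hu⟩‖]
        rw [← e, h5, add_zero]
        have := hfa u f
        rw [h4, inner_zero_left] at this
        exact this.symm
      · intro h hh
        obtain ⟨f, hf, rfl⟩ := (pcomp_range _ _ _).1 hh
        exact ⟨_, rfl⟩
    rw [this]
    exact hr
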